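/- arXiv:1701.04942 — 2 statements merged into one kernel-verified Lean document; each statement's English description precedes it below -/
import Mathlib

section
/- Let p be an odd prime and n ≥ 1. Every finite sequence (multiset) of elements of 𝔽_p^n whose length is at least (p − 1) · 2^p · C_p^n, where C_p = inf_{0<x<1} ((1 − x^p)/(1 − x)) · x^{−(p−1)/3}, contains a zero-sum subsequence of length p; that is, it has a sub-multiset of cardinality p whose sum is 0. Equivalently, the Erdős–Ginzburg–Ziv constant satisfies 𝔰(𝔽_p^n) ≤ (p − 1) · 2^p · C_p^n. -/
/-- The Erdős–Ginzburg–Ziv constant of an abelian group `G`: the smallest `k` such that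
every multiset of elements of `G` of cardinality `k` contains a sub-multiset of
cardinality `exp(G)` summing to zero. -/
noncomputable def EGZ (G : Type*) [AddCommMonoid G] : ℕ :=
  sInf {k | ∀ S : Multiset G, Multiset.card S = k →
    ∃ T ≤ S, Multiset.card T = AddMonoid.exponent G ∧ T.sum = 0}

/-- The Ellenberg–Gijswijt constant `C_p = inf_{0<x<1} ((1-x^p)/(1-x)) x^{-(p-1)/3}`. -/
noncomputable def EGconst (p : ℕ) : ℝ :=
  sInf {y : ℝ | ∃ x : ℝ, 0 < x ∧ x < 1 ∧
    y = (1 - x ^ p) / (1 - x) * x ^ (-(((p : ℝ) - 1) / 3))}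

/-!
Let `A` be a set of vectors in `𝔽_p ^ n` without `p` distinct elements of sum zero. For
`x : ZMod p → A`, consider the sum of the signs of those permutations of `ZMod p` that have at least
three orbits and fix `x`, multiplied by the indicator of `∑ i, x i = 0`. If all permutations were
admitted this would be a determinant with repeated rows, hence zero, unless `x` is injective; as it
is, it equals `1` when `x` is constant and `0` otherwise. So it is a diagonal tensor, and by the
tensor lemma of Tao and Naslund at least `#A` tensors of partition rank one are needed to write it
as a sum.

On the other hand, the indicator of `∑ i, x i = 0` is a polynomial of degree less than `p` in each
of the `n` coordinates, and for a permutation with three orbits each of its monomials has an orbit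
that carries at most a third of its degree. This orbit splits off as a monomial of low degree in the
common value of the variables, which gives at most `(2 ^ p - 2) * M` terms, where `M` is the number
of monomials of degree at most `n (p - 1) / 3` with all exponents below `p`. Chernoff's bound is
`M ≤ C_p ^ n`. A multiset without a zero-sum subsequence of length `p` takes each of its values at
most `p - 1` times, and its support is such a set `A`.
-/

open Finset

section PartitionRank

open scoped Matrix

variable {K X Y ι κ τ : Type*}

/-- Partition rank at most one, in the sense of Naslund: `F` is the product of a function of the
variables in `B` and a function of the variables outside `B`, where neither block is empty. The
zero function is included as soon as there are two variables. -/
def HasPartitionRankLEOne [Mul K] (F : (ι → X) → K) : Prop :=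
  ∃ (B : Set ι) (f g : (ι → X) → K), B.Nonempty ∧ Bᶜ.Nonempty ∧
    DependsOn f B ∧ DependsOn g Bᶜ ∧ F = f * g

namespace HasPartitionRankLEOne

theorem nontrivial [Mul K] {F : (ι → X) → K} (hF : HasPartitionRankLEOne F) : Nontrivial ι := by
  obtain ⟨B, -, -, ⟨i, hi⟩, ⟨j, hj⟩, -⟩ := hF
  exact ⟨i, j, fun hij => hj (hij ▸ hi)⟩

theorem comp_left [Mul K] {F : (ι → X) → K} (hF : HasPartitionRankLEOne F) (φ : Y → X) :
    HasPartitionRankLEOne fun y : ι → Y => F (φ ∘ y) := by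
  obtain ⟨B, f, g, hB, hB', hf, hg, rfl⟩ := hF
  exact ⟨B, fun y => f (φ ∘ y), fun y => g (φ ∘ y), hB, hB',
    fun x y hxy => hf fun i hi => congrArg φ (hxy i hi),
    fun x y hxy => hg fun i hi => congrArg φ (hxy i hi), rfl⟩

theorem reindex [Mul K] {F : (ι → X) → K} (hF : HasPartitionRankLEOne F) (e : ι ≃ κ) :
    HasPartitionRankLEOne fun x : κ → X => F (x ∘ e) := by
  obtain ⟨B, f, g, ⟨i, hi⟩, ⟨j, hj⟩, hf, hg, rfl⟩ := hF
  exact ⟨e.symm ⁻¹' B, fun x => f (x ∘ e), fun x => g (x ∘ e), ⟨e i, by simpa⟩, ⟨e j, by simpa⟩,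
    fun x y hxy => hf fun i hi => hxy (e i) (by simpa),
    fun x y hxy => hg fun i hi => hxy (e i) (by simpa using hi), rfl⟩

theorem exists_mem_block [CommMagma K] {F : (ι → X) → K} (hF : HasPartitionRankLEOne F) (i : ι) :
    ∃ (B : Set ι) (f g : (ι → X) → K), i ∈ B ∧ Bᶜ.Nonempty ∧
      DependsOn f B ∧ DependsOn g Bᶜ ∧ F = f * g := by
  obtain ⟨B, f, g, hB, hB', hf, hg, rfl⟩ := hF
  by_cases hi : i ∈ B
  · exact ⟨B, f, g, hi, hB', hf, hg, rfl⟩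
  · exact ⟨Bᶜ, g, f, hi, by rwa [compl_compl], hg, by rwa [compl_compl], mul_comm f g⟩

end HasPartitionRankLEOne

theorem dependsOn_comp_cons {α : Type*} {k : ℕ} {f : (Fin (k + 1) → X) → α}
    {B : Set (Fin (k + 1))} (hf : DependsOn f B) (a : X) :
    DependsOn (fun x : Fin k → X => f (Fin.cons a x)) (Fin.succ ⁻¹' B) := by
  refine fun x y hxy => hf fun i hi => ?_
  cases i using Fin.cases with
  | zero => rfl
  | succ i => exact hxy i hi

theorem apply_cons_eq_of_zero_notMem {α : Type*} {k : ℕ} {f : (Fin (k + 1) → X) → α}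
    {B : Set (Fin (k + 1))} (hf : DependsOn f B) (h0 : 0 ∉ B) (a b : X) (x : Fin k → X) :
    f (Fin.cons a x) = f (Fin.cons b x) := by
  refine hf fun i hi => ?_
  cases i using Fin.cases with
  | zero => exact absurd hi h0
  | succ i => rfl

/-- The contraction of the tensor `F` against the vector `h` in its first variable. -/
def contract [Fintype X] [NonUnitalNonAssocSemiring K] {k : ℕ} (h : X → K)
    (F : (Fin (k + 1) → X) → K) (x : Fin k → X) : K :=
  ∑ a, h a * F (Fin.cons a x)

-- The first case is that in which the first variable forms a block of its own.
theorem HasPartitionRankLEOne.contract_eq_zero_or [Fintype X] [Nonempty X] [CommSemiring K] {k : ℕ}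
    {F : (Fin (k + 1) → X) → K} (hF : HasPartitionRankLEOne F) :
    (∃ u : X → K, ∀ h : X → K, u ⬝ᵥ h = 0 → contract h F = 0) ∨
      ∀ h : X → K, HasPartitionRankLEOne (contract h F) := by
  obtain ⟨B, f, g, h0, ⟨j, hj⟩, hf, hg, rfl⟩ := hF.exists_mem_block 0
  obtain ⟨b⟩ := ‹Nonempty X›
  have hg_cons a x : g (Fin.cons a x) = g (Fin.cons b x) :=
    apply_cons_eq_of_zero_notMem hg (not_not.2 h0) a b x
  have hcontract h : contract h (f * g) =
      (fun x => ∑ a, h a * f (Fin.cons a x)) * fun x => g (Fin.cons b x) := by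
    funext x
    simp only [contract, Pi.mul_apply, hg_cons, sum_mul, mul_assoc]
  rcases (Fin.succ ⁻¹' B).eq_empty_or_nonempty with hB | hB
  · refine .inl ⟨fun a => f fun _ => a, fun h hu => ?_⟩
    have hf_cons a x : f (Fin.cons a x) = f fun _ => a := by
      refine hf fun i hi => ?_
      cases i using Fin.cases with
      | zero => rfl
      | succ i => exact absurd hi (Set.eq_empty_iff_forall_notMem.1 hB i)
    rw [hcontract]
    funext x
    simp only [Pi.mul_apply, hf_cons, mul_comm (h _), Pi.zero_apply]
    rw [← dotProduct, hu, zero_mul]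
  · refine .inr fun h => ⟨Fin.succ ⁻¹' B, _, _, hB, ?_, ?_, dependsOn_comp_cons hg b, hcontract h⟩
    · cases j using Fin.cases with
      | zero => exact absurd h0 hj
      | succ j => exact ⟨j, hj⟩
    · exact fun x y hxy => sum_congr rfl fun a _ =>
        congrArg (h a * ·) (dependsOn_comp_cons hf a hxy)

-- An element of `V` with maximal support will do.
open scoped Classical in
theorem exists_mem_finrank_le_card_support [Field K] [Fintype X] (V : Submodule K (X → K)) :
    ∃ h ∈ V, Module.finrank K V ≤ #{a | h a ≠ 0} := by
  obtain ⟨_, ⟨⟨h, hV, rfl⟩, hmax⟩⟩ :=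
    (Set.toFinite (Function.support '' (V : Set (X → K)))).exists_maximal ⟨_, 0, V.zero_mem, rfl⟩
  refine ⟨h, hV, not_lt.1 fun hlt => ?_⟩
  let restrict : V →ₗ[K] ({a // h a ≠ 0} → K) := LinearMap.funLeft K K Subtype.val ∘ₗ V.subtype
  obtain ⟨⟨w, hwV⟩, hw, hw0⟩ := (Submodule.ne_bot_iff _).1 <|
    LinearMap.ker_ne_bot_of_finrank_lt (f := restrict) <| by
      rwa [Module.finrank_fintype_fun_eq_card, Fintype.card_subtype]
  have hw_of_ne a (ha : h a ≠ 0) : w a = 0 := congrFun (LinearMap.mem_ker.1 hw) ⟨a, ha⟩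
  obtain ⟨b, hb⟩ : ∃ b, w b ≠ 0 := Function.ne_iff.1 fun h => hw0 (Subtype.ext h)
  have hle : h.support ≤ (h + w).support := fun a ha => by
    simpa [hw_of_ne a ha] using ha
  have hhb : h b = 0 := by_contra fun hhb => hb (hw_of_ne b hhb)
  exact hmax ⟨h + w, V.add_mem hV hwV, rfl⟩ hle (a := b) (by simpa [hhb]) hhb

open scoped Classical in
theorem exists_forall_dotProduct_eq_zero [Field K] [Fintype X] (T : Finset τ) (u : τ → X → K) :
    ∃ h : X → K, (∀ t ∈ T, u t ⬝ᵥ h = 0) ∧ Fintype.card X ≤ #{a | h a ≠ 0} + #T := by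
  let L : (X → K) →ₗ[K] (T → K) := (Matrix.of fun t : T => u t).mulVecLin
  obtain ⟨h, hL, hcard⟩ := exists_mem_finrank_le_card_support (LinearMap.ker L)
  refine ⟨h, fun t ht => congrFun (LinearMap.mem_ker.1 hL) ⟨t, ht⟩, ?_⟩
  have hrange := (LinearMap.range L).finrank_le
  have hrank := L.finrank_range_add_finrank_ker
  simp only [Module.finrank_fintype_fun_eq_card, Fintype.card_coe] at hrange hrank
  omega

theorem forall_cons_eq_cons_iff {k : ℕ} {a : X} {x : Fin (k + 1) → X} :
    (∀ i j, (Fin.cons a x : Fin (k + 2) → X) i = (Fin.cons a x : Fin (k + 2) → X) j) ↔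
      a = x 0 ∧ ∀ i j, x i = x j := by
  refine ⟨fun hc => ⟨hc 0 1, fun i j => hc i.succ j.succ⟩, ?_⟩
  rintro ⟨rfl, hx⟩ i j
  cases i using Fin.cases <;> cases j using Fin.cases <;> simp [hx _ 0]

-- On the diagonal only one summand of the contraction survives; off it none does.
theorem contract_ne_zero_iff [Fintype X] [Semiring K] [NoZeroDivisors K] {k : ℕ}
    {F : (Fin (k + 2) → X) → K} (hF : ∀ x, F x ≠ 0 ↔ ∀ i j, x i = x j) {h : X → K}
    {x : Fin (k + 1) → X} (hx : h (x 0) ≠ 0) :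
    contract h F x ≠ 0 ↔ ∀ i j, x i = x j := by
  have hsum : contract h F x = h (x 0) * F (Fin.cons (x 0) x) := by
    refine Fintype.sum_eq_single (x 0) fun a ha => ?_
    rw [not_not.1 (mt (hF _).1 fun hc => ha (forall_cons_eq_cons_iff.1 hc).1), mul_zero]
  rw [hsum, mul_ne_zero_iff, hF, forall_cons_eq_cons_iff]
  simp [hx]

theorem sum_contract [Fintype X] [NonUnitalNonAssocSemiring K] {k : ℕ} (T : Finset τ) (h : X → K)
    (F : τ → (Fin (k + 1) → X) → K) :
    ∑ t ∈ T, contract h (F t) = contract h (∑ t ∈ T, F t) := by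
  funext x
  simp only [contract, Finset.sum_apply, mul_sum]
  exact sum_comm

-- Contracting the first variable against a vector `h` with large support that is orthogonal to the
-- terms isolating this variable kills these terms, and leaves a diagonal tensor on the support.
theorem card_le_of_forall_hasPartitionRankLEOne_fin [Field K] [Fintype X] {k : ℕ} {T : Finset τ}
    {F : τ → (Fin (k + 1) → X) → K} (hF : ∀ t ∈ T, HasPartitionRankLEOne (F t))
    (hdiag : ∀ x, (∑ t ∈ T, F t) x ≠ 0 ↔ ∀ i j, x i = x j) :
    Fintype.card X ≤ #T := by
  classical
  rcases isEmpty_or_nonempty X with hX | ⟨⟨a⟩⟩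
  · simp
  induction k generalizing X T with
  | zero =>
    have hT : T = ∅ := eq_empty_of_forall_notMem fun t ht =>
      not_nontrivial (Fin 1) (hF t ht).nontrivial
    exact absurd (by simp [hT]) ((hdiag fun _ => a).2 fun _ _ => rfl)
  | succ k ih =>
    let Isolated (t : τ) : Prop := ∃ u : X → K, ∀ h : X → K, u ⬝ᵥ h = 0 → contract h (F t) = 0
    choose! u hu using fun t (ht : Isolated t) => ht
    obtain ⟨h, hh, hcard⟩ := exists_forall_dotProduct_eq_zero {t ∈ T | Isolated t} u
    have hsum : ∑ t ∈ T with ¬ Isolated t, contract h (F t) = contract h (∑ t ∈ T, F t) := by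
      rw [← sum_contract, ← sum_filter_add_sum_filter_not T Isolated, right_eq_add]
      exact sum_eq_zero fun t ht => hu t (mem_filter.1 ht).2 h (hh t ht)
    have hsupport : Fintype.card {a // h a ≠ 0} ≤ #{t ∈ T | ¬ Isolated t} := by
      rcases isEmpty_or_nonempty {a // h a ≠ 0} with hY | ⟨⟨b⟩⟩
      · simp
      refine ih (F := fun t y => contract h (F t) (Subtype.val ∘ y))
        (fun t ht => ?_) (fun y => ?_) b
      · have : Nonempty X := ⟨a⟩
        obtain ⟨htT, ht⟩ := mem_filter.1 ht
        exact (((hF t htT).contract_eq_zero_or.resolve_left ht) h).comp_left _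
      · have := contract_ne_zero_iff hdiag (x := Subtype.val ∘ y) (y 0).2
        rw [← hsum] at this
        simpa [Subtype.ext_iff] using this
    have hT : #{t ∈ T | Isolated t} + #{t ∈ T | ¬ Isolated t} = #T :=
      card_filter_add_card_filter_not _
    rw [Fintype.card_subtype] at hsupport
    omega

theorem card_le_of_forall_hasPartitionRankLEOne [Field K] [Fintype X] [Finite ι] {T : Finset τ}
    {F : τ → (ι → X) → K} (hF : ∀ t ∈ T, HasPartitionRankLEOne (F t))
    (hdiag : ∀ x, (∑ t ∈ T, F t) x ≠ 0 ↔ ∀ i j, x i = x j) :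
    Fintype.card X ≤ #T := by
  have := Fintype.ofFinite ι
  rcases isEmpty_or_nonempty ι with hι | hι
  · have hT : T = ∅ := eq_empty_of_forall_notMem fun t ht =>
      not_nontrivial ι (hF t ht).nontrivial
    exact absurd (by simp [hT]) ((hdiag isEmptyElim).2 isEmptyElim)
  obtain ⟨k, hk⟩ := Nat.exists_eq_add_one.2 (Fintype.card_pos (α := ι))
  let e : ι ≃ Fin (k + 1) := Fintype.equivFinOfCardEq hk
  refine card_le_of_forall_hasPartitionRankLEOne_fin (fun t ht => (hF t ht).reindex e) fun x => ?_
  have := hdiag (x ∘ e)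
  simpa [e.forall_congr_left] using this

end PartitionRank

section Permutations

open Equiv Equiv.Perm

variable {ι R : Type*}

theorem card_filter_fixed_modEq {α : Type*} [Fintype α] [DecidableEq α] {p : ℕ} [Fact p.Prime]
    {f : Perm α} (hf : f ^ p = 1) {P : α → Prop} [DecidablePred P] (hP : ∀ a, P (f a) ↔ P a) :
    #{a | f a = a ∧ P a} ≡ #{a | P a} [MOD p] := by
  let g : Perm {a // P a} := f.subtypePerm fun a => hP a
  have hg : g ^ p ^ 1 = 1 := by
    ext a
    simp [g, subtypePerm_pow, hf]
  have hsupport : #g.supportᶜ = #{a | f a = a ∧ P a} :=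
    card_bij (fun a _ => a) (fun a ha => by simpa [g, a.2, Subtype.ext_iff] using ha)
      (fun _ _ _ _ => Subtype.ext) fun a ha => by
        obtain ⟨-, hfa, ha⟩ := mem_filter.1 ha
        exact ⟨⟨a, ha⟩, by simpa [g, Subtype.ext_iff], rfl⟩
  rw [← hsupport, ← Fintype.card_subtype]
  exact card_compl_support_modEq hg

theorem sum_filter_fixed_eq_sum {α : Type*} [Fintype α] [DecidableEq α] [Ring R] {p : ℕ}
    [Fact p.Prime] [CharP R p] {f : Perm α} (hf : f ^ p = 1) {w : α → R}
    (hw : ∀ a, w (f a) = w a) : ∑ a with f a = a, w a = ∑ a, w a := by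
  classical
  have hsum (s : Finset α) : ∑ a ∈ s, w a = ∑ r ∈ univ.image w, (#{a ∈ s | w a = r} : R) * r := by
    rw [← sum_fiberwise_of_maps_to (g := w) (t := univ.image w) (by simp)]
    refine sum_congr rfl fun r _ => ?_
    rw [sum_congr rfl fun a ha => (mem_filter.1 ha).2, sum_const, nsmul_eq_mul]
  rw [hsum, hsum univ]
  refine sum_congr rfl fun r _ => ?_
  rw [filter_filter, (CharP.natCast_eq_natCast R p).2 <|
    card_filter_fixed_modEq hf fun a => by rw [hw a]]

/-- The permutation `σ` has at least three orbits, fixed points included. -/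
def HasThreeOrbits (σ : Perm ι) : Prop :=
  ∃ a b c, ¬ σ.SameCycle a b ∧ ¬ σ.SameCycle a c ∧ ¬ σ.SameCycle b c

theorem HasThreeOrbits.conj {σ : Perm ι} (hσ : HasThreeOrbits σ) (τ : Perm ι) :
    HasThreeOrbits (τ * σ * τ⁻¹) := by
  obtain ⟨a, b, c, hab, hac, hbc⟩ := hσ
  exact ⟨τ a, τ b, τ c, by simpa [sameCycle_conj], by simpa [sameCycle_conj],
    by simpa [sameCycle_conj]⟩

theorem hasThreeOrbits_conj_iff {σ τ : Perm ι} :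
    HasThreeOrbits (τ * σ * τ⁻¹) ↔ HasThreeOrbits σ :=
  ⟨fun h => by simpa [mul_assoc] using h.conj τ⁻¹, fun h => h.conj τ⟩

theorem hasThreeOrbits_one [Fintype ι] (hι : 2 < Fintype.card ι) :
    HasThreeOrbits (1 : Perm ι) := by
  obtain ⟨a, b, c, hab, hac, hbc⟩ := Fintype.two_lt_card_iff.1 hι
  exact ⟨a, b, c, by simpa, by simpa, by simpa⟩

theorem three_mul_sum_orbit_le [Fintype ι] [DecidableEq ι] {σ : Perm ι} (hσ : HasThreeOrbits σ)
    (w : ι → ℕ) :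
    ∃ a b, ¬ σ.SameCycle a b ∧ 3 * ∑ i with σ.SameCycle a i, w i ≤ ∑ i, w i := by
  obtain ⟨a, b, c, hab, hac, hbc⟩ := hσ
  let orbit (a : ι) : Finset ι := {i | σ.SameCycle a i}
  have hdisj {a b} (h : ¬ σ.SameCycle a b) : Disjoint (orbit a) (orbit b) :=
    disjoint_filter.2 fun i _ ha hb => h (ha.trans hb.symm)
  have htotal : ∑ i ∈ orbit a, w i + ∑ i ∈ orbit b, w i + ∑ i ∈ orbit c, w i ≤ ∑ i, w i := by
    rw [← sum_union (hdisj hab), ← sum_union (disjoint_union_left.2 ⟨hdisj hac, hdisj hbc⟩)]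
    exact sum_le_sum_of_subset (subset_univ _)
  by_cases ha : 3 * ∑ i ∈ orbit a, w i ≤ ∑ i, w i
  · exact ⟨a, b, hab, ha⟩
  by_cases hb : 3 * ∑ i ∈ orbit b, w i ≤ ∑ i, w i
  · exact ⟨b, c, hbc, hb⟩
  · exact ⟨c, a, fun h => hac h.symm, show 3 * ∑ i ∈ orbit c, w i ≤ _ by omega⟩

theorem eq_of_sameCycle {X : Type*} {σ : Perm ι} {x : ι → X} {a b : ι}
    (hx : ∀ i, σ.SameCycle a i → x (σ i) = x i) (h : σ.SameCycle a b) : x a = x b := by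
  obtain ⟨m, rfl⟩ := h
  induction m using Int.induction_on with
  | zero => rfl
  | succ m ih => rwa [add_comm, zpow_add, zpow_one, Perm.mul_apply, hx _ ⟨m, rfl⟩]
  | pred m ih =>
    rwa [← hx _ ⟨-m - 1, rfl⟩, ← Perm.mul_apply, ← zpow_one_add, add_sub_cancel]

theorem sameCycle_addRight {p : ℕ} [Fact p.Prime] {d : ZMod p} (hd : d ≠ 0) (a b : ZMod p) :
    (Equiv.addRight d).SameCycle a b := by
  refine ⟨((b - a) / d).val, ?_⟩
  rw [zpow_natCast, Equiv.nsmul_addRight, Equiv.coe_addRight, nsmul_eq_mul,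
    ZMod.natCast_zmod_val, div_mul_cancel₀ _ hd]
  exact add_sub_cancel a b

theorem eq_addRight_of_commute {m : ℕ} [NeZero m] {σ : Perm (ZMod m)}
    (h : Commute σ (Equiv.addRight 1)) : σ = Equiv.addRight (σ 0) := by
  ext i
  have := congrArg (fun τ : Perm (ZMod m) => τ 0) (h.pow_right i.val).eq
  simpa [Equiv.nsmul_addRight, add_comm] using this

theorem HasThreeOrbits.eq_one_of_commute {p : ℕ} [Fact p.Prime] {σ : Perm (ZMod p)}
    (hσ : HasThreeOrbits σ) (h : Commute σ (Equiv.addRight 1)) : σ = 1 := by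
  obtain ⟨a, b, -, hab, -⟩ := hσ
  rw [eq_addRight_of_commute h] at hab ⊢
  rw [not_ne_iff.1 (mt (sameCycle_addRight · a b) hab), Equiv.addRight_zero]

-- Conjugation by the translation `i ↦ i + 1` has order `p` and preserves the summand, so modulo `p`
-- only the permutations commuting with the translation contribute.
open scoped Classical in
theorem sum_sign_hasThreeOrbits {p : ℕ} [Fact p.Prime] (hp : 2 < p) [Ring R] [CharP R p] :
    ∑ σ : Perm (ZMod p) with HasThreeOrbits σ, ((sign σ : ℤ) : R) = 1 := by
  let c : Perm (ZMod p) := Equiv.addRight 1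
  let f : Perm (Perm (ZMod p)) := MulAut.toPerm _ (MulAut.conj c)
  have hf_apply σ : f σ = c * σ * c⁻¹ := rfl
  let w (σ : Perm (ZMod p)) : R := if HasThreeOrbits σ then ((sign σ : ℤ) : R) else 0
  have hf : f ^ p = 1 := by
    simp [f, ← map_pow, c, Equiv.nsmul_addRight]
  have hw σ : w (f σ) = w σ := by
    have hsign : sign (c * σ * c⁻¹) = sign σ := by
      rw [Perm.sign_mul, Perm.sign_mul, Perm.sign_inv, mul_right_comm, Int.units_mul_self, one_mul]
    simp only [w, hf_apply, hasThreeOrbits_conj_iff, hsign]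
  have hone : HasThreeOrbits (1 : Perm (ZMod p)) := hasThreeOrbits_one (by rwa [ZMod.card])
  rw [sum_filter, ← sum_filter_fixed_eq_sum hf hw, sum_eq_single_of_mem 1 (by simp [hf_apply])]
  · simp [w, hone]
  · intro σ hσ hne
    refine if_neg fun h => hne (h.eq_one_of_commute ?_)
    exact (mul_inv_eq_iff_eq_mul.1 (mem_filter.1 hσ).2).symm

-- The sum is the determinant of the matrix with entries `1` where `x i = x j` and `0` elsewhere.
open scoped Classical in
theorem sum_sign_fixing_eq_zero {X : Type*} [Fintype ι] [DecidableEq ι] [CommRing R] {x : ι → X}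
    (hx : ¬ Function.Injective x) :
    ∑ σ : Perm ι with ∀ i, x (σ i) = x i, ((sign σ : ℤ) : R) = 0 := by
  obtain ⟨i, j, hij, hne⟩ := Function.not_injective_iff.1 hx
  let M : Matrix ι ι R := .of fun a b => if x a = x b then 1 else 0
  have hdet : M.det = 0 := Matrix.det_zero_of_row_eq hne (by ext b; simp [M, hij])
  rw [← hdet, Matrix.det_apply', sum_filter]
  refine sum_congr rfl fun σ _ => ?_
  simp [M, prod_ite_zero]

end Permutations

section LowDegree

/-- The exponent vectors of the monomials in `n` variables whose degree in each variable is less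
than `p` and whose total degree is at most a third of the maximal one, `n * (p - 1)`. -/
def lowDegreeExponents (p n : ℕ) : Finset (Fin n → ℕ) :=
  {e ∈ Fintype.piFinset fun _ => range p | 3 * ∑ l, e l ≤ n * (p - 1)}

theorem mem_lowDegreeExponents {p n : ℕ} {e : Fin n → ℕ} :
    e ∈ lowDegreeExponents p n ↔ (∀ l, e l < p) ∧ 3 * ∑ l, e l ≤ n * (p - 1) := by
  simp [lowDegreeExponents]

theorem card_lowDegreeExponents_pos {p : ℕ} (hp : 0 < p) (n : ℕ) :
    0 < #(lowDegreeExponents p n) :=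
  card_pos.2 ⟨0, by simp [mem_lowDegreeExponents, hp]⟩

theorem card_lowDegreeExponents_mul_rpow_le {p : ℕ} (hp : 1 ≤ p) (n : ℕ) {x : ℝ} (hx0 : 0 < x)
    (hx1 : x ≤ 1) :
    #(lowDegreeExponents p n) * x ^ (((p : ℝ) - 1) / 3 * n) ≤ (∑ j ∈ range p, x ^ j) ^ n := by
  have hterm : ∀ e ∈ lowDegreeExponents p n,
      x ^ (((p : ℝ) - 1) / 3 * n) ≤ x ^ ∑ l, e l := by
    intro e he
    have hdeg : (3 : ℝ) * (∑ l, e l : ℕ) ≤ n * (p - 1 : ℕ) := by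
      exact_mod_cast (mem_lowDegreeExponents.1 he).2
    rw [Nat.cast_sub hp, Nat.cast_one] at hdeg
    rw [← Real.rpow_natCast]
    exact Real.rpow_le_rpow_of_exponent_ge hx0 hx1 (by linarith)
  calc _ = ∑ _e ∈ lowDegreeExponents p n, x ^ (((p : ℝ) - 1) / 3 * n) := by simp
    _ ≤ ∑ e ∈ lowDegreeExponents p n, x ^ ∑ l, e l := sum_le_sum hterm
    _ ≤ ∑ e ∈ Fintype.piFinset fun _ : Fin n => range p, x ^ ∑ l, e l :=
      sum_le_sum_of_subset_of_nonneg (filter_subset _ _) fun _ _ _ => by positivity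
    _ = ∑ e ∈ Fintype.piFinset fun _ : Fin n => range p, ∏ l, x ^ e l := by
      simp only [prod_pow_eq_pow_sum]
    _ = (∑ j ∈ range p, x ^ j) ^ n := by
      rw [sum_prod_piFinset, prod_const, card_univ, Fintype.card_fin]

theorem card_lowDegreeExponents_le {p n : ℕ} (hp : 1 ≤ p) (hn : n ≠ 0) :
    (#(lowDegreeExponents p n) : ℝ) ≤ EGconst p ^ n := by
  set M : ℝ := ((#(lowDegreeExponents p n) : ℕ) : ℝ)
  have hM : 0 ≤ M := Nat.cast_nonneg _
  suffices M ^ (n⁻¹ : ℝ) ≤ EGconst p by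
    rw [← Real.rpow_inv_natCast_pow hM hn]
    gcongr
  refine le_csInf ⟨_, 1 / 2, by norm_num, by norm_num, rfl⟩ ?_
  rintro _ ⟨x, hx0, hx1, rfl⟩
  have hgeom : (1 - x ^ p) / (1 - x) = ∑ j ∈ range p, x ^ j := by
    rw [geom_sum_eq hx1.ne, ← neg_div_neg_eq, neg_sub, neg_sub]
  rw [hgeom, Real.rpow_neg hx0.le, ← div_eq_mul_inv]
  refine le_of_pow_le_pow_left₀ hn (by positivity) ?_
  rw [Real.rpow_inv_natCast_pow hM hn, div_pow, ← Real.rpow_mul_natCast hx0.le,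
    le_div_iff₀ (by positivity)]
  exact card_lowDegreeExponents_mul_rpow_le hp n hx0 hx1.le

end LowDegree

section Decomposition

open Equiv Equiv.Perm

variable {K ι X : Type*} {n p : ℕ}

/-- The tensors `f * g` with `f` fixed and `g` a function of the variables outside `B`. -/
def multiplesOutside [CommSemiring K] (f : (ι → X) → K) (B : Set ι) :
    Submodule K ((ι → X) → K) where
  carrier := {F | ∃ g, DependsOn g Bᶜ ∧ F = f * g}
  zero_mem' := ⟨0, fun _ _ _ => rfl, (mul_zero f).symm⟩
  add_mem' := by
    rintro _ _ ⟨g, hg, rfl⟩ ⟨g', hg', rfl⟩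
    exact ⟨g + g', fun x y hxy => congrArg₂ (· + ·) (hg hxy) (hg' hxy), (mul_add f g g').symm⟩
  smul_mem' := by
    rintro c _ ⟨g, hg, rfl⟩
    exact ⟨c • g, fun x y hxy => congrArg (c * ·) (hg hxy), (mul_smul_comm c f g).symm⟩

open scoped Classical in
/-- The monomial `v a ^ e` in the common value `a` of the variables in the block `B`, extended by
zero to the points where these variables are not all equal. Summing over `a` avoids the choice of a
representative of the block; at most one summand is nonzero as soon as `B` is nonempty. -/
noncomputable def blockMonomial [CommSemiring K] [Fintype X] (v : X → Fin n → K) (B : Finset ι)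
    (e : Fin n → ℕ) (x : ι → X) : K :=
  ∑ a, if ∀ i ∈ B, x i = a then ∏ l, v a l ^ e l else 0

open scoped Classical in
theorem blockMonomial_eq_ite [CommSemiring K] [Fintype X] (v : X → Fin n → K) {B : Finset ι}
    {b : ι} (hb : b ∈ B) (e : Fin n → ℕ) (x : ι → X) :
    blockMonomial v B e x = if ∀ i ∈ B, x i = x b then ∏ l, v (x b) l ^ e l else 0 :=
  Fintype.sum_eq_single (x b) fun _ ha => if_neg fun h => ha (h b hb).symm

theorem dependsOn_blockMonomial [CommSemiring K] [Fintype X] (v : X → Fin n → K) (B : Finset ι)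
    (e : Fin n → ℕ) : DependsOn (blockMonomial v B e) B := by
  classical
  intro x y hxy
  have hiff a : (∀ i ∈ B, x i = a) ↔ ∀ i ∈ B, y i = a :=
    forall₂_congr fun i hi => by rw [hxy i hi]
  exact sum_congr rfl fun a _ => if_congr (hiff a) rfl rfl

/-- The span of the tensors that split off, from some proper nonempty block of variables, a monomial
of low degree in the common value of these variables. -/
noncomputable def lowDegreeSpan [CommSemiring K] [Fintype ι] [DecidableEq ι] [Fintype X]
    (v : X → Fin n → K) (p : ℕ) : Submodule K ((ι → X) → K) :=
  ⨆ t ∈ ({∅, univ}ᶜ : Finset (Finset ι)) ×ˢ lowDegreeExponents p n,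
    multiplesOutside (blockMonomial v t.1 t.2) t.1

theorem blockMonomial_mul_mem_lowDegreeSpan [CommSemiring K] [Fintype ι] [DecidableEq ι] [Fintype X]
    (v : X → Fin n → K) {B : Finset ι} (hB : B ≠ ∅) (hB' : B ≠ univ) {e : Fin n → ℕ}
    (he : e ∈ lowDegreeExponents p n) {g : (ι → X) → K} (hg : DependsOn g (B : Set ι)ᶜ) :
    blockMonomial v B e * g ∈ lowDegreeSpan v p :=
  Submodule.mem_iSup_of_mem (B, e) <|
    Submodule.mem_iSup_of_mem (by simp [hB, hB', he]) ⟨g, hg, rfl⟩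

theorem card_le_of_mem_lowDegreeSpan [Field K] [Fintype ι] [DecidableEq ι] [Nonempty ι] [Fintype X]
    {v : X → Fin n → K} {F : (ι → X) → K} (hF : F ∈ lowDegreeSpan v p)
    (hdiag : ∀ x, F x ≠ 0 ↔ ∀ i j, x i = x j) :
    Fintype.card X ≤ (2 ^ Fintype.card ι - 2) * #(lowDegreeExponents p n) := by
  obtain ⟨G, rfl⟩ := (Submodule.mem_iSup_finset_iff_exists_sum _ _).1 hF
  have hblocks : #({∅, univ}ᶜ : Finset (Finset ι)) = 2 ^ Fintype.card ι - 2 := by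
    rw [card_compl, Fintype.card_finset, card_pair univ_nonempty.ne_empty.symm]
  rw [← hblocks, ← card_product]
  refine card_le_of_forall_hasPartitionRankLEOne (fun t ht => ?_) hdiag
  obtain ⟨g, hg, hG⟩ := (G t).2
  obtain ⟨hB, hB'⟩ : t.1 ≠ ∅ ∧ t.1 ≠ univ := by simpa using (mem_product.1 ht).1
  refine ⟨t.1, _, g, nonempty_iff_ne_empty.2 hB, ?_, dependsOn_blockMonomial v t.1 t.2, hg, hG⟩
  exact Set.nonempty_compl.2 (by exact_mod_cast hB')

open scoped Classical in
/-- The restriction to the variables in `C` of the monomial `∏ i, v (x i) ^ m i`, extended by zero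
to the points `x` which `σ` does not fix. -/
noncomputable def invariantMonomial [CommSemiring K] (v : X → Fin n → K) (σ : Perm ι)
    (m : ι → Fin n → ℕ) (C : Finset ι) (x : ι → X) : K :=
  if ∀ i ∈ C, x (σ i) = x i then ∏ i ∈ C, ∏ l, v (x i) l ^ m i l else 0

theorem dependsOn_invariantMonomial [CommSemiring K] (v : X → Fin n → K) {σ : Perm ι}
    (m : ι → Fin n → ℕ) {C : Finset ι} (hC : ∀ i ∈ C, σ i ∈ C) :
    DependsOn (invariantMonomial v σ m C) C := by
  classical
  intro x y hxy
  have hiff : (∀ i ∈ C, x (σ i) = x i) ↔ ∀ i ∈ C, y (σ i) = y i :=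
    forall₂_congr fun i hi => by rw [hxy i hi, hxy _ (hC i hi)]
  exact if_congr hiff (prod_congr rfl fun i hi => by rw [hxy i hi]) rfl

theorem invariantMonomial_mul_compl [CommSemiring K] [Fintype ι] [DecidableEq ι]
    (v : X → Fin n → K) (σ : Perm ι) (m : ι → Fin n → ℕ) (C : Finset ι) :
    invariantMonomial v σ m C * invariantMonomial v σ m Cᶜ = invariantMonomial v σ m univ := by
  funext x
  have hiff : ((∀ i ∈ C, x (σ i) = x i) ∧ ∀ i ∈ Cᶜ, x (σ i) = x i) ↔
      ∀ i ∈ univ, x (σ i) = x i := by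
    rw [← forall_mem_union, union_compl]
  simp only [invariantMonomial, Pi.mul_apply, ite_zero_mul_ite_zero, prod_mul_prod_compl]
  congr 1
  exact propext hiff

theorem invariantMonomial_orbit [CommSemiring K] [Fintype ι] [DecidableEq ι] [Fintype X]
    (v : X → Fin n → K) (σ : Perm ι) (m : ι → Fin n → ℕ) (a : ι) :
    invariantMonomial v σ m {i | σ.SameCycle a i} =
      blockMonomial v {i | σ.SameCycle a i} fun l => ∑ i with σ.SameCycle a i, m i l := by
  funext x
  set B : Finset ι := {i | σ.SameCycle a i}
  have hmem {i} : i ∈ B ↔ σ.SameCycle a i := by simp [B]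
  have hiff : (∀ i ∈ B, x (σ i) = x i) ↔ ∀ i ∈ B, x i = x a := by
    simp only [hmem]
    refine ⟨fun hx i hi => (eq_of_sameCycle hx hi).symm, fun hx i hi => ?_⟩
    rw [hx _ (sameCycle_apply_right.2 hi), hx i hi]
  rw [blockMonomial_eq_ite v (hmem.2 .rfl)]
  by_cases hx : ∀ i ∈ B, x i = x a
  swap
  · rw [invariantMonomial, if_neg (mt hiff.1 hx), if_neg hx]
  rw [invariantMonomial, if_pos (hiff.2 hx), if_pos hx, prod_comm]
  refine prod_congr rfl fun l _ => ?_
  rw [← prod_pow_eq_pow_sum]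
  exact prod_congr rfl fun i hi => by rw [hx i hi]

theorem invariantMonomial_mem_lowDegreeSpan [CommSemiring K] [Fintype ι] [DecidableEq ι] [Fintype X]
    (v : X → Fin n → K) {σ : Perm ι} (hσ : HasThreeOrbits σ) {m : ι → Fin n → ℕ}
    (hm : ∀ l, ∑ i, m i l < p) :
    invariantMonomial v σ m univ ∈ lowDegreeSpan v p := by
  obtain ⟨a, b, hab, hdeg⟩ := three_mul_sum_orbit_le hσ fun i => ∑ l, m i l
  let B : Finset ι := {i | σ.SameCycle a i}
  have hlow : (fun l => ∑ i ∈ B, m i l) ∈ lowDegreeExponents p n := by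
    refine mem_lowDegreeExponents.2
      ⟨fun l => (sum_le_sum_of_subset (subset_univ B)).trans_lt (hm l), ?_⟩
    calc 3 * ∑ l, ∑ i ∈ B, m i l = 3 * ∑ i ∈ B, ∑ l, m i l := by rw [sum_comm]
      _ ≤ ∑ i, ∑ l, m i l := hdeg
      _ = ∑ l, ∑ i, m i l := sum_comm
      _ ≤ ∑ _l : Fin n, (p - 1) := sum_le_sum fun l _ => Nat.le_sub_one_of_lt (hm l)
      _ = n * (p - 1) := by simp
  have hBc : ∀ i ∈ Bᶜ, σ i ∈ Bᶜ := by simp [B]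
  rw [← invariantMonomial_mul_compl v σ m B, invariantMonomial_orbit]
  refine blockMonomial_mul_mem_lowDegreeSpan v (ne_empty_of_mem (a := a) ?_) ?_ hlow ?_
  · exact mem_filter.2 ⟨mem_univ a, .rfl⟩
  · exact fun h => hab (mem_filter.1 (h ▸ mem_univ b)).2
  · rw [← coe_compl]
    exact dependsOn_invariantMonomial v m hBc

open scoped Classical in
theorem ite_prod_eval_mem_lowDegreeSpan [CommSemiring K] [Fintype ι] [DecidableEq ι] [Fintype X]
    (v : X → Fin n → K) {σ : Perm ι} (hσ : HasThreeOrbits σ) {Q : Fin n → MvPolynomial ι K}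
    (hQ : ∀ l, (Q l).totalDegree < p) :
    (fun x : ι → X => if ∀ i, x (σ i) = x i then ∏ l, (Q l).eval fun i => v (x i) l else 0) ∈
      lowDegreeSpan v p := by
  have hexpand : (fun x : ι → X =>
        if ∀ i, x (σ i) = x i then ∏ l, (Q l).eval fun i => v (x i) l else 0) =
      ∑ d ∈ Fintype.piFinset fun l => (Q l).support,
        (∏ l, (Q l).coeff (d l)) • invariantMonomial v σ (fun i l => d l i) univ := by
    funext x
    simp only [invariantMonomial, MvPolynomial.eval_eq', prod_univ_sum, Finset.sum_apply,
      Pi.smul_apply, smul_eq_mul, mul_ite, mul_zero, mem_univ, true_imp_iff]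
    split_ifs
    · refine sum_congr rfl fun d _ => ?_
      rw [prod_mul_distrib, prod_comm]
    · simp
  rw [hexpand]
  refine Submodule.sum_mem _ fun d hd => Submodule.smul_mem _ _ <|
    invariantMonomial_mem_lowDegreeSpan v hσ fun l => ?_
  have := MvPolynomial.le_totalDegree (Fintype.mem_piFinset.1 hd l)
  rw [Finsupp.sum_fintype _ _ fun _ => rfl] at this
  exact this.trans_lt (hQ l)

end Decomposition

section ThreeOrbitTensor

open Equiv Equiv.Perm

variable {K ι R V X : Type*} {n p : ℕ}

/-- The polynomial `1 - (∑ i, X i) ^ (#K - 1)` over a finite field `K`, which is the indicator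
function of the tuples with sum zero. -/
noncomputable def zeroSumPolynomial (K ι : Type*) [Field K] [Fintype K] [Fintype ι] :
    MvPolynomial ι K :=
  1 - (∑ i, MvPolynomial.X i) ^ (Fintype.card K - 1)

theorem eval_zeroSumPolynomial [Field K] [Fintype K] [DecidableEq K] [Fintype ι] (z : ι → K) :
    (zeroSumPolynomial K ι).eval z = if ∑ i, z i = 0 then 1 else 0 := by
  have hcard : Fintype.card K - 1 ≠ 0 := (Nat.sub_pos_of_lt Fintype.one_lt_card).ne'
  simp only [zeroSumPolynomial, map_sub, map_one, map_pow, map_sum, MvPolynomial.eval_X]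
  split_ifs with h
  · rw [h, zero_pow hcard, sub_zero]
  · rw [FiniteField.pow_card_sub_one_eq_one _ h, sub_self]

theorem totalDegree_zeroSumPolynomial_lt [Field K] [Fintype K] [Fintype ι] :
    (zeroSumPolynomial K ι).totalDegree < Fintype.card K := by
  have hcard : 1 < Fintype.card K := Fintype.one_lt_card
  have hsum : (∑ i, MvPolynomial.X i : MvPolynomial ι K).totalDegree ≤ 1 :=
    MvPolynomial.totalDegree_finsetSum_le fun i _ => (MvPolynomial.totalDegree_X i).le
  have hpow := (MvPolynomial.totalDegree_pow (∑ i : ι, MvPolynomial.X i : MvPolynomial ι K)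
    (Fintype.card K - 1)).trans (Nat.mul_le_mul_left _ hsum)
  have := MvPolynomial.totalDegree_sub 1
    ((∑ i : ι, MvPolynomial.X i : MvPolynomial ι K) ^ (Fintype.card K - 1))
  rw [MvPolynomial.totalDegree_one, zero_max] at this
  exact (this.trans hpow).trans_lt (by omega)

open scoped Classical in
/-- The signed number of permutations with at least three orbits which fix the tuple `x`, cut off
to the tuples for which `∑ i, v (x i)` vanishes. -/
noncomputable def threeOrbitTensor (R : Type*) [Ring R] [Fintype ι] [DecidableEq ι]
    [AddCommMonoid V] (v : X → V) (x : ι → X) : R :=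
  if ∑ i, v (x i) = 0 then
    ∑ σ : Perm ι with HasThreeOrbits σ ∧ ∀ i, x (σ i) = x i, ((sign σ : ℤ) : R)
  else 0

theorem threeOrbitTensor_mem_lowDegreeSpan [Field K] [Fintype K] [Fintype ι] [DecidableEq ι]
    [Fintype X] (v : X → Fin n → K) :
    (threeOrbitTensor K v : (ι → X) → K) ∈ lowDegreeSpan v (Fintype.card K) := by
  classical
  have hexpand : (threeOrbitTensor K v : (ι → X) → K) =
      ∑ σ : Perm ι with HasThreeOrbits σ, ((sign σ : ℤ) : K) • fun x : ι → X =>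
        if ∀ i, x (σ i) = x i then
          ∏ l, (zeroSumPolynomial K ι).eval fun i => v (x i) l else 0 := by
    funext x
    have hzero : (∀ l ∈ univ, ∑ i, v (x i) l = 0) ↔ ∑ i, v (x i) = 0 := by
      simp [funext_iff]
    simp only [threeOrbitTensor, eval_zeroSumPolynomial, prod_ite_zero, hzero, prod_const_one,
      Finset.sum_apply, Pi.smul_apply, smul_eq_mul, mul_ite, mul_one, mul_zero, filter_and]
    split_ifs
    · rw [← filter_and, ← filter_filter, sum_filter]
    · simp
  rw [hexpand]
  exact Submodule.sum_mem _ fun σ hσ => Submodule.smul_mem _ _ <|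
    ite_prod_eval_mem_lowDegreeSpan v (mem_filter.1 hσ).2 fun _ => totalDegree_zeroSumPolynomial_lt

theorem eq_of_sum_eq_zero_of_two_values [Fact p.Prime] [AddCommGroup V] [Module (ZMod p) V]
    [Fintype ι] (hι : Fintype.card ι = p) {y : ι → V} (hsum : ∑ i, y i = 0)
    (hy : ∀ a b c, y a = y b ∨ y a = y c ∨ y b = y c) (a b : ι) : y a = y b := by
  classical
  by_contra hab
  let s : Finset ι := {i | y i = y a}
  have hcount : (#s : ZMod p) • (y a - y b) = 0 := calc
    (#s : ZMod p) • (y a - y b) = ∑ i ∈ s, (y i - y b) := by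
      rw [sum_congr rfl fun i hi => by rw [(mem_filter.1 hi).2], sum_const, Nat.cast_smul_eq_nsmul]
    _ = ∑ i, (y i - y b) := by
      refine sum_subset (subset_univ s) fun i _ hi => sub_eq_zero.2 ?_
      have hia : y i ≠ y a := by simpa [s] using hi
      grind [hy i a b]
    _ = 0 := by
      rw [sum_sub_distrib, hsum, sum_const, card_univ, hι, ZModModule.char_nsmul_eq_zero, sub_zero]
  have hs : (#s : ZMod p) ≠ 0 := by
    rw [Ne, ZMod.natCast_eq_zero_iff]
    refine Nat.not_dvd_of_pos_of_lt (card_pos.2 ⟨a, by simp [s]⟩) ?_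
    rw [← hι]
    exact card_lt_univ_of_notMem (x := b) (by simpa [s] using Ne.symm hab)
  exact hab (sub_eq_zero.1 ((smul_eq_zero.1 hcount).resolve_left hs))

theorem threeOrbitTensor_of_forall_eq [Fact p.Prime] (hp : 2 < p) [Ring R] [CharP R p]
    [AddCommGroup V] [Module (ZMod p) V] (v : X → V) {x : ZMod p → X} (hx : ∀ i j, x i = x j) :
    threeOrbitTensor R v x = 1 := by
  classical
  have hsum : ∑ i, v (x i) = 0 := by
    rw [sum_congr rfl fun i _ => by rw [hx i 0], sum_const, card_univ, ZMod.card,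
      ZModModule.char_nsmul_eq_zero]
  have hfix (σ : Perm (ZMod p)) : ∀ i, x (σ i) = x i := fun i => hx (σ i) i
  rw [threeOrbitTensor, if_pos hsum, filter_congr fun σ _ => and_iff_left (hfix σ)]
  exact sum_sign_hasThreeOrbits hp

-- A permutation with at most two orbits only fixes tuples with at most two values, and these cannot
-- sum to zero unless they are constant. So here the restriction to three orbits is void, and all
-- that is left is the determinant of `sum_sign_fixing_eq_zero`.
theorem threeOrbitTensor_of_ne [Fact p.Prime] [CommRing R] [AddCommGroup V] [Module (ZMod p) V]
    {v : X → V} (hv : Function.Injective v)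
    (hfree : ∀ x : ZMod p → X, Function.Injective x → ∑ i, v (x i) ≠ 0) {x : ZMod p → X}
    {i j : ZMod p} (hij : x i ≠ x j) : threeOrbitTensor R v x = 0 := by
  classical
  refine ite_eq_right_iff.2 fun hsum => ?_
  have hthree {σ : Perm (ZMod p)} (hσ : ∀ i, x (σ i) = x i) : HasThreeOrbits σ := by
    by_contra h
    refine hij (hv (eq_of_sum_eq_zero_of_two_values (ZMod.card p) hsum (fun a b c => ?_) i j))
    have hcycle : σ.SameCycle a b ∨ σ.SameCycle a c ∨ σ.SameCycle b c := by
      by_contra! hne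
      exact h ⟨a, b, c, hne⟩
    have heq {a b} (hab : σ.SameCycle a b) : v (x a) = v (x b) :=
      congrArg v (eq_of_sameCycle (fun i _ => hσ i) hab)
    exact hcycle.imp heq (.imp heq heq)
  simp only [and_iff_right_of_imp hthree]
  exact sum_sign_fixing_eq_zero fun hx => hfree x hx hsum

theorem threeOrbitTensor_ne_zero_iff [Fact p.Prime] (hp : 2 < p) [CommRing R] [Nontrivial R]
    [CharP R p] [AddCommGroup V] [Module (ZMod p) V] {v : X → V} (hv : Function.Injective v)
    (hfree : ∀ x : ZMod p → X, Function.Injective x → ∑ i, v (x i) ≠ 0) (x : ZMod p → X) :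
    threeOrbitTensor R v x ≠ 0 ↔ ∀ i j, x i = x j := by
  refine ⟨fun h => ?_, fun h => ?_⟩
  · by_contra! hne
    obtain ⟨i, j, hij⟩ := hne
    exact h (threeOrbitTensor_of_ne hv hfree hij)
  · rw [threeOrbitTensor_of_forall_eq hp v h]
    exact one_ne_zero

end ThreeOrbitTensor

section ErdosGinzburgZiv

variable {n p : ℕ}

theorem card_le_of_forall_sum_ne_zero [Fact p.Prime] (hp : 2 < p) {A : Finset (Fin n → ZMod p)}
    (hA : ∀ T ⊆ A, #T = p → ∑ a ∈ T, a ≠ 0) :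
    #A ≤ (2 ^ p - 2) * #(lowDegreeExponents p n) := by
  have hfree (x : ZMod p → A) (hx : Function.Injective x) : ∑ i, (x i : Fin n → ZMod p) ≠ 0 := by
    let f : ZMod p ↪ (Fin n → ZMod p) := ⟨fun i => x i, Subtype.val_injective.comp hx⟩
    have hf : univ.map f ⊆ A := by
      intro a ha
      obtain ⟨i, -, rfl⟩ := mem_map.1 ha
      exact (x i).2
    simpa [f] using hA (univ.map f) hf (by simp)
  have hspan := threeOrbitTensor_mem_lowDegreeSpan (ι := ZMod p) (Subtype.val : A → Fin n → ZMod p)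
  simpa only [Fintype.card_coe, ZMod.card] using card_le_of_mem_lowDegreeSpan hspan
    (threeOrbitTensor_ne_zero_iff hp Subtype.val_injective hfree)

theorem exists_le_card_eq_sum_eq_zero_of_le_count {V : Type*} [AddCommGroup V] [Module (ZMod p) V]
    [DecidableEq V] {S : Multiset V} {a : V} (ha : p ≤ S.count a) :
    ∃ T ≤ S, T.card = p ∧ T.sum = 0 :=
  ⟨.replicate p a, Multiset.le_count_iff_replicate_le.1 ha, Multiset.card_replicate p a, by
    rw [Multiset.sum_replicate, ZModModule.char_nsmul_eq_zero]⟩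

theorem exists_le_card_eq_sum_eq_zero [Fact p.Prime] (hp : 2 < p) {S : Multiset (Fin n → ZMod p)}
    (hS : (p - 1) * 2 ^ p * #(lowDegreeExponents p n) ≤ S.card) :
    ∃ T ≤ S, T.card = p ∧ T.sum = 0 := by
  classical
  by_contra! hfree
  have hcount a (_ : a ∈ S) : S.count a ≤ p - 1 := by
    by_contra! h
    obtain ⟨T, hTS, hT, hsum⟩ := exists_le_card_eq_sum_eq_zero_of_le_count (p := p) (S := S)
      (a := a) (by omega)
    exact hfree T hTS hT hsum
  have hsupport : #S.toFinset ≤ (2 ^ p - 2) * #(lowDegreeExponents p n) := by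
    refine card_le_of_forall_sum_ne_zero hp fun T hT hcard => ?_
    simpa using hfree T.1 ((Multiset.le_iff_subset T.2).2 fun a ha => by simpa using hT ha) hcard
  have hlow : 0 < #(lowDegreeExponents p n) := card_lowDegreeExponents_pos (by omega) n
  refine hS.not_gt ?_
  calc S.card ≤ #S.toFinset * (p - 1) := by
        rw [← Multiset.toFinset_sum_count_eq]
        exact sum_le_card_nsmul _ _ _ fun a ha => hcount a (Multiset.mem_toFinset.1 ha)
    _ ≤ (2 ^ p - 2) * #(lowDegreeExponents p n) * (p - 1) := Nat.mul_le_mul_right _ hsupport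
    _ < 2 ^ p * #(lowDegreeExponents p n) * (p - 1) := by
        gcongr
        · omega
        · exact Nat.sub_lt (by positivity) two_pos
    _ = (p - 1) * 2 ^ p * #(lowDegreeExponents p n) := by ring

theorem exponent_fun {ι G : Type*} [Nonempty ι] [AddMonoid G] :
    AddMonoid.exponent (ι → G) = AddMonoid.exponent G := by
  refine Nat.dvd_antisymm (AddMonoid.exponent_dvd_of_forall_nsmul_eq_zero fun x => ?_)
    (AddMonoid.exponent_dvd_of_forall_nsmul_eq_zero fun a => ?_)
  · exact funext fun i => AddMonoid.exponent_nsmul_eq_zero (x i)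
  · exact congrFun (AddMonoid.exponent_nsmul_eq_zero fun _ : ι => a) (Classical.arbitrary ι)

end ErdosGinzburgZiv

theorem stmt_1 (p n : ℕ) (hp : p.Prime) (hodd : Odd p) (hn : 1 ≤ n) :
    (∀ S : Multiset (Fin n → ZMod p),
      ((p : ℝ) - 1) * 2 ^ p * EGconst p ^ n ≤ (Multiset.card S : ℝ) →
      ∃ T ≤ S, Multiset.card T = p ∧ T.sum = 0) ∧
    (EGZ (Fin n → ZMod p) : ℝ) ≤ ((p : ℝ) - 1) * 2 ^ p * EGconst p ^ n := by
  have : Fact p.Prime := ⟨hp⟩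
  have hp2 : 2 < p := hp.two_le.lt_of_ne (by rintro rfl; exact absurd hodd (by decide))
  have : NeZero n := ⟨Nat.one_le_iff_ne_zero.1 hn⟩
  have hbound : (((p - 1) * 2 ^ p * #(lowDegreeExponents p n) : ℕ) : ℝ) ≤
      ((p : ℝ) - 1) * 2 ^ p * EGconst p ^ n := by
    have hp1 : (0 : ℝ) ≤ p - 1 := sub_nonneg.2 (by exact_mod_cast hp.one_le)
    push_cast [Nat.cast_sub hp.one_le]
    gcongr
    exact card_lowDegreeExponents_le hp.one_le (NeZero.ne n)
  refine ⟨fun S hS => exists_le_card_eq_sum_eq_zero hp2 ?_, le_trans ?_ hbound⟩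
  · exact_mod_cast hbound.trans hS
  · refine Nat.cast_le.2 (Nat.sInf_le fun S hS => ?_)
    rw [exponent_fun, ZMod.exponent]
    exact exists_le_card_eq_sum_eq_zero hp2 hS.ge
end

section
/- Let q be a prime power and n ≥ 1. Suppose A ⊆ (ℤ/qℤ)^n satisfies |A| > γ_q^n, where γ_q = inf_{0<x<1} ((1 − x^q)/(1 − x)) · x^{−(q−1)/q}. Then there exist q elements x₁, …, x_q ∈ A, not necessarily distinct but not all equal, with x₁ + ⋯ + x_q = 0. -/
/-- `γ_q = inf_{0<t<1} ((1-t^q)/(1-t)) · t^{-(q-1)/q}`. -/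
noncomputable def gammaConst (q : ℕ) : ℝ :=
  sInf {y : ℝ | ∃ t : ℝ, 0 < t ∧ t < 1 ∧
    y = (1 - t ^ q) / (1 - t) * t ^ (-(((q : ℝ) - 1) / q))}

/-!
Let `q = p ^ k`. In characteristic `p`, `∑_{e < q} (-1) ^ e * choose M e` is the indicator of
`q ∣ M`, so by Vandermonde's identity the indicator of `x₁ + ⋯ + x_q = 0` on `((ℤ/q)^n)^q` is a sum
of products of binomial monomials in the `x_i`. The degrees in each coordinate add up to less than
`q`, so by pigeonhole some factor of each product has total degree at most `n(q - 1)/q`.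

Hence functions `f_i` on `A` orthogonal to all monomials of such low degree are orthogonal to the
indicator. If `A` has only constant zero sums, this says `∑_{a ∈ A} ∏_i f_i(a) = 0`. Taking all but
two of the `f_i` equal to some `h` of maximal support in the space `V` of these functions,
`V` is orthogonal to `h ^ (q - 2) * V`, which has the same dimension; so `2 dim V ≤ |A|`, and `|A|`
is at most twice the number of low-degree monomials. Comparing this number with
`(1 + t + ⋯ + t ^ (q - 1)) ^ n` gives `|A| ≤ 2 γ(t) ^ n`, and passing to powers of `A` removes
the factor `2`.
-/

open Finset Module

section Binomial

theorem choose_sum_eq_sum_finsuppAntidiag {κ : Type*} [DecidableEq κ] (s : Finset κ) (y : κ → ℕ)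
    (e : ℕ) :
    (∑ i ∈ s, y i).choose e = ∑ l ∈ s.finsuppAntidiag e, ∏ i ∈ s, (y i).choose (l i) := by
  have hcoeff (n j : ℕ) : PowerSeries.coeff j ((1 + PowerSeries.X) ^ n : PowerSeries ℕ) =
      n.choose j := by
    have hcoe : (((1 + Polynomial.X) ^ n : Polynomial ℕ) : PowerSeries ℕ) =
        (1 + PowerSeries.X) ^ n := by simp
    rw [← hcoe, Polynomial.coeff_coe, Polynomial.coeff_one_add_X_pow, Nat.cast_id]
  rw [← hcoeff, ← prod_pow_eq_pow_sum, PowerSeries.coeff_prod]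
  simp only [hcoeff]

variable (R : Type*) [CommRing R] {p : ℕ} [Fact p.Prime] [CharP R p]

theorem periodic_cast_choose {j k : ℕ} (hj : j < p ^ k) :
    Function.Periodic (fun n : ℕ ↦ (n.choose j : R)) (p ^ k) := by
  intro n
  open Polynomial in
  have hfrob : ((1 + X) ^ (n + p ^ k) : R[X]) = (1 + X) ^ n + (1 + X) ^ n * X ^ p ^ k := by
    rw [pow_add, add_pow_char_pow, one_pow, mul_add, mul_one]
  simpa [Polynomial.coeff_one_add_X_pow, Polynomial.coeff_mul_X_pow', hj.not_ge] using
    congrArg (Polynomial.coeff · j) hfrob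

theorem alternating_sum_cast_choose (k M : ℕ) :
    ∑ e ∈ range (p ^ k), (-1) ^ e * (M.choose e : R) = if p ^ k ∣ M then 1 else 0 := by
  have hlt : M % p ^ k < p ^ k := Nat.mod_lt _ (NeZero.pos _)
  calc ∑ e ∈ range (p ^ k), (-1) ^ e * (M.choose e : R)
      = ∑ e ∈ range (p ^ k), (-1) ^ e * ((M % p ^ k).choose e : R) :=
        sum_congr rfl fun e he ↦ by
          rw [(periodic_cast_choose R (mem_range.mp he)).map_mod_nat M]
    _ = ∑ e ∈ range (M % p ^ k + 1), (-1) ^ e * ((M % p ^ k).choose e : R) :=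
        (sum_subset (range_subset_range.mpr hlt) fun e _ he ↦ by
          rw [Nat.choose_eq_zero_of_lt (by simpa using he), Nat.cast_zero, mul_zero]).symm
    _ = if p ^ k ∣ M then 1 else 0 := by
        simpa [Nat.dvd_iff_mod_eq_zero] using
          congrArg (Int.cast : ℤ → R) (Int.alternating_sum_range_choose (n := M % p ^ k))

end Binomial

section Expansion

variable {ι κ : Type*} [Fintype ι] [Fintype κ] [DecidableEq κ]

/-- The exponents `l : κ → ℕ` of total degree less than `q`, as finitely supported functions. -/
def exponentsLT (κ : Type*) [Fintype κ] [DecidableEq κ] (q : ℕ) : Finset (κ →₀ ℕ) :=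
  (range q).biUnion (univ.finsuppAntidiag ·)

theorem mem_exponentsLT {q : ℕ} {l : κ →₀ ℕ} : l ∈ exponentsLT κ q ↔ ∑ i, l i < q := by
  simp [exponentsLT, mem_finsuppAntidiag]

/-- The signed binomial monomial `∏ j, (-1) ^ α j * (x j).choose (α j)`, with the coordinates of `x`
represented in `[0, q)`. It replaces the monomial `x ^ α`, which does not make sense for `R`-valued
functions on `(ℤ/q)^ι`; the sign removes all coefficients from the expansion of the indicator of
zero-sum tuples. -/
def binomMonomial {q : ℕ} (R : Type*) [CommRing R] (α : ι → ℕ) (x : ι → ZMod q) : R :=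
  ∏ j, (-1) ^ α j * ((x j).val.choose (α j) : R)

variable (R : Type*) [CommRing R] {p k : ℕ} [Fact p.Prime] [CharP R p]

theorem ite_sum_eq_zero_eq_sum_prod_choose (y : κ → ZMod (p ^ k)) :
    (if ∑ i, y i = 0 then (1 : R) else 0) =
      ∑ l ∈ exponentsLT κ (p ^ k), ∏ i, (-1) ^ l i * ((y i).val.choose (l i) : R) := by
  have hdvd : ∑ i, y i = 0 ↔ p ^ k ∣ ∑ i, (y i).val := by
    rw [← ZMod.natCast_eq_zero_iff]; simp
  have hdisj : (range (p ^ k) : Set ℕ).PairwiseDisjoint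
      ((univ : Finset κ).finsuppAntidiag ·) := fun a _ b _ hab ↦
    disjoint_left.mpr fun l ha hb ↦
      hab ((mem_finsuppAntidiag.mp ha).1.symm.trans (mem_finsuppAntidiag.mp hb).1)
  simp only [hdvd, ← alternating_sum_cast_choose R k, exponentsLT, sum_biUnion hdisj]
  refine sum_congr rfl fun e _ ↦ ?_
  rw [choose_sum_eq_sum_finsuppAntidiag, Nat.cast_sum, mul_sum]
  refine sum_congr rfl fun l hl ↦ ?_
  rw [prod_mul_distrib, prod_pow_eq_pow_sum, (mem_finsuppAntidiag.mp hl).1, Nat.cast_prod]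

theorem ite_sum_eq_zero_eq_sum_prod_binomMonomial [DecidableEq ι] (x : κ → ι → ZMod (p ^ k)) :
    (if ∑ i, x i = 0 then (1 : R) else 0) =
      ∑ δ ∈ Fintype.piFinset fun _ : ι ↦ exponentsLT κ (p ^ k),
        ∏ i, binomMonomial R (fun j ↦ δ j i) (x i) := by
  calc (if ∑ i, x i = 0 then (1 : R) else 0)
      = ∏ j, if ∑ i, x i j = 0 then (1 : R) else 0 := by
        simp [prod_ite_zero, funext_iff]
    _ = _ := by
        simp only [ite_sum_eq_zero_eq_sum_prod_choose R, prod_univ_sum]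
        exact sum_congr rfl fun δ _ ↦ prod_comm

end Expansion

section Orthogonality

variable {ι κ : Type*} [Fintype ι] [DecidableEq ι] [Fintype κ]

/-- The exponents `α : ι → ℕ` with entries less than `q` and with average at most `(q - 1) / q`. -/
def lowDegree (ι : Type*) [Fintype ι] [DecidableEq ι] (q : ℕ) : Finset (ι → ℕ) :=
  {α ∈ Fintype.piFinset fun _ : ι ↦ range q | q * ∑ j, α j ≤ Fintype.card ι * (q - 1)}

theorem mem_lowDegree {q : ℕ} {α : ι → ℕ} :
    α ∈ lowDegree ι q ↔ (∀ j, α j < q) ∧ q * ∑ j, α j ≤ Fintype.card ι * (q - 1) := by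
  simp [lowDegree]

theorem exists_mem_lowDegree [Nonempty κ] {δ : ι → κ → ℕ}
    (hδ : ∀ j, ∑ i, δ j i < Fintype.card κ) :
    ∃ i, (fun j ↦ δ j i) ∈ lowDegree ι (Fintype.card κ) := by
  have hsum : ∑ i, Fintype.card κ * ∑ j, δ j i ≤ ∑ _i : κ, Fintype.card ι * (Fintype.card κ - 1) :=
    calc ∑ i, Fintype.card κ * ∑ j, δ j i = Fintype.card κ * ∑ j, ∑ i, δ j i := by
          rw [← mul_sum, sum_comm]
      _ ≤ Fintype.card κ * ∑ _j : ι, (Fintype.card κ - 1) := by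
          gcongr with j
          exact Nat.le_sub_one_of_lt (hδ j)
      _ = _ := by simp
  obtain ⟨i, -, hi⟩ := exists_le_of_sum_le univ_nonempty hsum
  exact ⟨i, mem_lowDegree.mpr
    ⟨fun j ↦ (single_le_sum_of_canonicallyOrdered (mem_univ i)).trans_lt (hδ j), hi⟩⟩

theorem sum_ite_prod_eq_zero_of_orthogonal {R : Type*} [CommRing R] {p k : ℕ} [Fact p.Prime]
    [CharP R p] [DecidableEq κ] (hκ : Fintype.card κ = p ^ k) (A : Finset (ι → ZMod (p ^ k)))
    (h : κ → A → R)
    (hh : ∀ i, ∀ α ∈ lowDegree ι (p ^ k), ∑ a, binomMonomial R α a.1 * h i a = 0) :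
    ∑ x : κ → A, (if ∑ i, (x i).1 = 0 then ∏ i, h i (x i) else 0) = 0 := by
  have : Nonempty κ := Fintype.card_pos_iff.mp (hκ ▸ NeZero.pos _)
  calc ∑ x : κ → A, (if ∑ i, (x i).1 = 0 then ∏ i, h i (x i) else 0)
      = ∑ x : κ → A, ∑ δ ∈ Fintype.piFinset fun _ : ι ↦ exponentsLT κ (p ^ k),
          ∏ i, binomMonomial R (fun j ↦ δ j i) (x i).1 * h i (x i) :=
        sum_congr rfl fun x _ ↦ by
          rw [← one_mul (∏ i, _), ← ite_zero_mul,
            ite_sum_eq_zero_eq_sum_prod_binomMonomial R fun i ↦ (x i).1, sum_mul]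
          simp only [prod_mul_distrib]
    _ = ∑ δ ∈ Fintype.piFinset fun _ : ι ↦ exponentsLT κ (p ^ k),
          ∏ i, ∑ a, binomMonomial R (fun j ↦ δ j i) a.1 * h i a := by
        rw [sum_comm]
        simp only [prod_univ_sum, Fintype.piFinset_univ]
    _ = 0 := sum_eq_zero fun δ hδ ↦ by
        have hdeg (j : ι) : ∑ i, δ j i < Fintype.card κ :=
          hκ ▸ mem_exponentsLT.mp (Fintype.mem_piFinset.mp hδ j)
        obtain ⟨i, hi⟩ := exists_mem_lowDegree (δ := fun j ↦ δ j) hdeg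
        exact prod_eq_zero (mem_univ i) (hh i _ (hκ ▸ hi))

end Orthogonality

section Linear

variable {B : Type*}

theorem exists_mem_forall_eq_zero_of_eqOn_support [Finite B] {M : Type*} [AddMonoid M]
    (V : AddSubmonoid (B → M)) :
    ∃ h ∈ V, ∀ v ∈ V, Set.EqOn v 0 (Function.support h) → v = 0 := by
  obtain ⟨h, hhV, hmax⟩ := Set.Finite.exists_maximalFor' Function.support (V : Set (B → M))
    (Set.toFinite _) ⟨0, V.zero_mem⟩
  refine ⟨h, hhV, fun v hv hvanish ↦ ?_⟩
  have hle : Function.support h ⊆ Function.support (h + v) := fun x hx ↦ by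
    simpa [hvanish hx] using hx
  funext x
  by_contra hvx
  have hhx : h x = 0 := by_contra fun hx ↦ hvx (hvanish hx)
  exact hmax (V.add_mem hhV hv) hle (by simpa [hhx] using hvx) hhx

variable {F : Type*} [Field F] [Fintype B]

theorem finrank_add_finrank_le_card_of_dotProduct_eq_zero {V W : Submodule F (B → F)}
    (hVW : ∀ v ∈ V, ∀ w ∈ W, v ⬝ᵥ w = 0) :
    finrank F V + finrank F W ≤ Fintype.card B := by
  classical
  have hle : V.map (dotProductEquiv F B).toLinearMap ≤ W.dualAnnihilator := by
    rintro _ ⟨v, hv, rfl⟩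
    exact (Submodule.mem_dualAnnihilator _).mpr (hVW v hv)
  have hrank := Submodule.finrank_mono hle
  rw [LinearEquiv.finrank_map_eq] at hrank
  have := Subspace.finrank_add_finrank_dualAnnihilator_eq W
  rw [finrank_fintype_fun_eq_card] at this
  lia

theorem two_mul_finrank_le_card_of_sum_prod_eq_zero {m : ℕ} (hm : 2 ≤ m) {V : Submodule F (B → F)}
    (hV : ∀ f : Fin m → B → F, (∀ i, f i ∈ V) → ∑ x, ∏ i, f i x = 0) :
    2 * finrank F V ≤ Fintype.card B := by
  obtain ⟨e, rfl⟩ := Nat.exists_eq_add_of_le' hm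
  obtain ⟨h, hhV, hsupp⟩ := exists_mem_forall_eq_zero_of_eqOn_support V.toAddSubmonoid
  let μ : (B → F) →ₗ[F] (B → F) := LinearMap.mulLeft F (h ^ e)
  have hinj : Function.Injective (μ.domRestrict V) := by
    refine (injective_iff_map_eq_zero _).mpr fun v hv ↦ Subtype.ext (hsupp v v.2 fun x hx ↦ ?_)
    have hx' : h x ≠ 0 := hx
    simpa [μ, hx'] using congrFun hv x
  have hrank : finrank F (V.map μ) = finrank F V := by
    rw [← LinearMap.range_domRestrict, LinearMap.finrank_range_of_inj hinj]
  have horth : ∀ v ∈ V, ∀ w ∈ V.map μ, v ⬝ᵥ w = 0 := by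
    rintro v hv _ ⟨w, hw, rfl⟩
    have hf := hV (Fin.cons v (Fin.cons w fun _ ↦ h))
      (Fin.cases hv (Fin.cases hw fun _ ↦ hhV))
    simpa [μ, dotProduct, Fin.prod_univ_succ, mul_comm] using hf
  have := finrank_add_finrank_le_card_of_dotProduct_eq_zero horth
  lia

end Linear

section ZeroSums

variable {G : Type*} [AddCommMonoid G]

/-- `A` admits only the trivial zero sums of length `m`: if `x₁, …, x_m ∈ A` add up to zero, then
they are all equal. -/
def HasOnlyConstantZeroSums (m : ℕ) (A : Finset G) : Prop :=
  ∀ x : Fin m → G, (∀ i, x i ∈ A) → ∑ i, x i = 0 → ∀ i j, x i = x j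

namespace HasOnlyConstantZeroSums

variable {m : ℕ}

theorem map {H : Type*} [AddCommMonoid H] {A : Finset G} (hA : HasOnlyConstantZeroSums m A)
    (e : G ≃+ H) : HasOnlyConstantZeroSums m (A.map e.toEquiv.toEmbedding) := by
  intro x hx hsum i j
  refine e.symm.injective (hA (fun i ↦ e.symm (x i)) (fun i ↦ ?_) ?_ i j)
  · simpa [mem_map_equiv] using hx i
  · rw [← map_sum, hsum, map_zero]

theorem piFinset {A : Finset G} (hA : HasOnlyConstantZeroSums m A) {τ : Type*} [Fintype τ]
    [DecidableEq τ] : HasOnlyConstantZeroSums m (Fintype.piFinset fun _ : τ ↦ A) := by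
  intro x hx hsum i j
  funext a
  refine hA (fun i ↦ x i a) (fun i ↦ Fintype.mem_piFinset.mp (hx i) a) ?_ i j
  simpa using congrFun hsum a

theorem sum_ite_eq_sum_const [NeZero m] [DecidableEq G] {A : Finset G}
    (hA : HasOnlyConstantZeroSums m A) (htorsion : ∀ a ∈ A, m • a = 0) {R : Type*}
    [AddCommMonoid R] (f : (Fin m → A) → R) :
    ∑ x : Fin m → A, (if ∑ i, (x i).1 = 0 then f x else 0) = ∑ a : A, f fun _ ↦ a := by
  have hzero : ({x : Fin m → A | ∑ i, (x i).1 = 0} : Finset _) =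
      univ.map ⟨Function.const (Fin m), Function.const_injective⟩ := by
    ext x
    simp only [mem_filter, mem_univ, true_and, mem_map, Function.Embedding.coeFn_mk]
    constructor
    · exact fun hx ↦ ⟨x 0, funext fun i ↦ Subtype.ext (hA _ (fun i ↦ (x i).2) hx 0 i)⟩
    · rintro ⟨a, rfl⟩
      simpa using htorsion a a.2
  rw [← sum_filter, hzero, sum_map]
  rfl

end HasOnlyConstantZeroSums

variable {ι : Type*} [Fintype ι] [DecidableEq ι] {p k : ℕ} [Fact p.Prime]

theorem HasOnlyConstantZeroSums.card_le_two_mul_card_lowDegree (hk : k ≠ 0)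
    {A : Finset (ι → ZMod (p ^ k))} (hA : HasOnlyConstantZeroSums (p ^ k) A) :
    #A ≤ 2 * #(lowDegree ι (p ^ k)) := by
  let Φ : (A → ZMod p) →ₗ[ZMod p] (lowDegree ι (p ^ k) → ZMod p) :=
    Matrix.mulVecLin (Matrix.of fun α a ↦ binomMonomial (ZMod p) α.1 a.1)
  have horth (f : A → ZMod p) (hf : f ∈ LinearMap.ker Φ) (α) (hα : α ∈ lowDegree ι (p ^ k)) :
      ∑ a : A, binomMonomial (ZMod p) α a.1 * f a = 0 :=
    congrFun (LinearMap.mem_ker.mp hf) ⟨α, hα⟩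
  have hker : 2 * finrank (ZMod p) (LinearMap.ker Φ) ≤ #A := by
    rw [← Fintype.card_coe]
    refine two_mul_finrank_le_card_of_sum_prod_eq_zero
      ((Fact.out : p.Prime).two_le.trans (Nat.le_self_pow hk p)) fun f hf ↦ ?_
    rw [← hA.sum_ite_eq_sum_const (fun a _ ↦ by ext; simp) fun x ↦ ∏ i, f i (x i)]
    exact sum_ite_prod_eq_zero_of_orthogonal (Fintype.card_fin _) A f fun i ↦ horth (f i) (hf i)
  have hrank := Φ.finrank_range_add_finrank_ker
  have hrange := Submodule.finrank_le (LinearMap.range Φ)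
  rw [finrank_fintype_fun_eq_card, Fintype.card_coe] at hrank hrange
  lia

end ZeroSums

section Counting

/-- The function of `t` whose infimum over `0 < t < 1` is `gammaConst q`. -/
noncomputable def gammaFun (q : ℕ) (t : ℝ) : ℝ :=
  (1 - t ^ q) / (1 - t) * t ^ (-(((q : ℝ) - 1) / q))

theorem gammaConst_eq_sInf_image (q : ℕ) : gammaConst q = sInf (gammaFun q '' Set.Ioo 0 1) := by
  simp only [gammaConst, gammaFun, Set.image, Set.mem_Ioo, and_assoc, eq_comm]

variable {q : ℕ} {t : ℝ}

theorem gammaFun_eq_sum_mul (ht : t ≠ 1) :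
    gammaFun q t = (∑ d ∈ range q, t ^ d) * t ^ (-(((q : ℝ) - 1) / q)) := by
  rw [gammaFun, geom_sum_eq ht, ← neg_div_neg_eq, neg_sub, neg_sub]

theorem gammaFun_pos (hq : q ≠ 0) (ht : t ∈ Set.Ioo 0 1) : 0 < gammaFun q t := by
  rw [gammaFun_eq_sum_mul ht.2.ne]
  exact mul_pos (geom_sum_pos ht.1.le hq) (Real.rpow_pos_of_pos ht.1 _)

theorem card_lowDegree_le_gammaFun_pow (ι : Type*) [Fintype ι] [DecidableEq ι] (hq : q ≠ 0)
    (ht : t ∈ Set.Ioo 0 1) : (#(lowDegree ι q) : ℝ) ≤ gammaFun q t ^ Fintype.card ι := by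
  obtain ⟨ht0, ht1⟩ := ht
  set s : ℝ := ((q : ℝ) - 1) / q
  have hpow (α) (hα : α ∈ lowDegree ι q) : (t ^ s) ^ Fintype.card ι ≤ t ^ ∑ j, α j := by
    have hdeg : (q : ℝ) * (∑ j, α j : ℕ) ≤ Fintype.card ι * ((q : ℝ) - 1) := by
      have := (mem_lowDegree.mp hα).2
      rw [← Nat.cast_pred (Nat.pos_of_ne_zero hq)]
      exact_mod_cast this
    rw [← Real.rpow_mul_natCast ht0.le, ← Real.rpow_natCast]
    refine Real.rpow_le_rpow_of_exponent_ge ht0 ht1.le ?_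
    rw [div_mul_eq_mul_div, le_div_iff₀ (by positivity)]
    linarith
  have hmarkov : #(lowDegree ι q) * (t ^ s) ^ Fintype.card ι ≤
      (∑ d ∈ range q, t ^ d) ^ Fintype.card ι :=
    calc #(lowDegree ι q) * (t ^ s) ^ Fintype.card ι
        ≤ ∑ α ∈ lowDegree ι q, t ^ ∑ j, α j := by
          rw [← nsmul_eq_mul]
          exact card_nsmul_le_sum _ _ _ hpow
      _ ≤ ∑ α ∈ Fintype.piFinset fun _ : ι ↦ range q, t ^ ∑ j, α j :=
          sum_le_sum_of_subset_of_nonneg (filter_subset _ _) fun _ _ _ ↦ by positivity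
      _ = (∑ d ∈ range q, t ^ d) ^ Fintype.card ι := by
          simp only [← prod_pow_eq_pow_sum, ← prod_univ_sum, prod_const, card_univ]
  rwa [gammaFun_eq_sum_mul ht1.ne, Real.rpow_neg ht0.le, ← div_eq_mul_inv, div_pow,
    le_div_iff₀ (by positivity)]

end Counting

section TensorPower

theorem le_of_forall_pow_le_mul_pow {K : Type*} [Field K] [LinearOrder K] [IsStrictOrderedRing K]
    [Archimedean K] {a b C : K} (hb : 0 < b) (h : ∀ m : ℕ, a ^ m ≤ C * b ^ m) : a ≤ b := by
  by_contra! hab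
  obtain ⟨m, hm⟩ := pow_unbounded_of_one_lt C ((one_lt_div hb).mpr hab)
  rw [div_pow, lt_div_iff₀ (pow_pos hb m)] at hm
  exact hm.not_ge (h m)

theorem le_sInf_pow {S : Set ℝ} (hS : S.Nonempty) (hS0 : ∀ s ∈ S, 0 ≤ s) {a : ℝ} {n : ℕ}
    (h : ∀ s ∈ S, a ≤ s ^ n) : a ≤ sInf S ^ n := by
  have hmono : MonotoneOn (· ^ n : ℝ → ℝ) S := fun s hs _ _ hst ↦ pow_le_pow_left₀ (hS0 s hs) hst n
  have hmap := hmono.map_csInf_of_continuousWithinAt (continuous_pow n).continuousWithinAt hS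
    ⟨0, hS0⟩
  exact (le_csInf (hS.image _) (Set.forall_mem_image.mpr h)).trans_eq hmap.symm

variable {ι : Type*} [Fintype ι] {p k : ℕ} [Fact p.Prime] {A : Finset (ι → ZMod (p ^ k))}

theorem HasOnlyConstantZeroSums.card_le_gammaFun_pow (hk : k ≠ 0)
    (hA : HasOnlyConstantZeroSums (p ^ k) A) {t : ℝ} (ht : t ∈ Set.Ioo 0 1) :
    (#A : ℝ) ≤ gammaFun (p ^ k) t ^ Fintype.card ι := by
  classical
  have hq : p ^ k ≠ 0 := NeZero.ne _
  refine le_of_forall_pow_le_mul_pow (C := 2) (pow_pos (gammaFun_pos hq ht) _) fun m ↦ ?_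
  let curry := (LinearEquiv.curry ℕ (ZMod (p ^ k)) (Fin m) ι).symm.toAddEquiv
  have hpower := ((hA.piFinset (τ := Fin m)).map curry).card_le_two_mul_card_lowDegree hk
  rw [card_map, Fintype.card_piFinset_const] at hpower
  calc (#A : ℝ) ^ m ≤ 2 * #(lowDegree (Fin m × ι) (p ^ k)) := by exact_mod_cast hpower
    _ ≤ 2 * gammaFun (p ^ k) t ^ Fintype.card (Fin m × ι) := by
        gcongr
        exact card_lowDegree_le_gammaFun_pow _ hq ht
    _ = 2 * (gammaFun (p ^ k) t ^ Fintype.card ι) ^ m := by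
        rw [Fintype.card_prod, Fintype.card_fin, mul_comm m, pow_mul]

theorem HasOnlyConstantZeroSums.card_le_gammaConst_pow (hk : k ≠ 0)
    (hA : HasOnlyConstantZeroSums (p ^ k) A) :
    (#A : ℝ) ≤ gammaConst (p ^ k) ^ Fintype.card ι := by
  rw [gammaConst_eq_sInf_image]
  refine le_sInf_pow ((Set.nonempty_Ioo.mpr one_pos).image _) ?_ ?_
  · exact Set.forall_mem_image.mpr fun t ht ↦ (gammaFun_pos (NeZero.ne _) ht).le
  · exact Set.forall_mem_image.mpr fun t ht ↦ hA.card_le_gammaFun_pow hk ht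

end TensorPower

theorem stmt_12 (q n : ℕ) (hq : IsPrimePow q) (hn : 1 ≤ n)
    (A : Finset (Fin n → ZMod q)) (hA : gammaConst q ^ n < (A.card : ℝ)) :
    ∃ x : Fin q → (Fin n → ZMod q),
      (∀ i, x i ∈ A) ∧ ¬(∀ i j, x i = x j) ∧ ∑ i, x i = 0 := by
  by_contra! hconst
  obtain ⟨p, k, hp, hk, rfl⟩ := hq
  have : Fact p.Prime := ⟨hp.nat_prime⟩
  have honly : HasOnlyConstantZeroSums (p ^ k) A := fun x hx hsum ↦
    by_contra fun hne ↦ hconst x hx (by simpa using hne) hsum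
  exact hA.not_ge (by simpa using honly.card_le_gammaConst_pow hk.ne')
end
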